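/- arXiv:1001.1959 — 2 statements merged into one kernel-verified Lean document; each statement's English description precedes it below -/
import Mathlib

section
/- Let A be a von Neumann algebra acting on H, let Ω ∈ H, and let (P_t)_{t≥0} be an increasing family of orthogonal projections on H. Let f : [0,∞) → B(H) take values in A, be hermitian, increasing, and adapted-commuting with respect to (P_t). Fix t > 0 and let X : [0,t] → A satisfy X(s)Ω = P_s (X(t)Ω) for all 0 ≤ s ≤ t. For a partition θ = {0 = t_0 < ⋯ < t_m = t} of [0,t] set S_θ = Σ_{k=1}^m f(t_{k−1})(X(t_k) − X(t_{k−1})). Then for every x' in the commutant A' of A, the net (S_θ (x'Ω)), indexed by the partitions of [0,t] directed by refinement, converges in norm in H; moreover, denoting the limit by I(x'Ω), one has I((y' x')Ω) = y' I(x'Ω) for all x', y' ∈ A'. -/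
/-- `sigmaSum f X θ` is the integral sum S_θ = Σ_{k=1}^m f(t_{k−1})(X(t_k) − X(t_{k−1}))
where t₀ < t₁ < ⋯ < tₘ is the increasing enumeration of the finite set θ. -/
noncomputable def sigmaSum {H : Type*} [NormedAddCommGroup H] [InnerProductSpace ℂ H]
    (f X : ℝ → H →L[ℂ] H) (θ : Finset ℝ) : H →L[ℂ] H :=
  (((θ.sort (· ≤ ·)).zip (θ.sort (· ≤ ·)).tail).map
    (fun p => f p.1 ∘L (X p.2 - X p.1))).sum

/-- `IsPartitionOf a b θ`: θ is a partition a = t₀ < t₁ < ⋯ < tₘ = b of [a,b]. -/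
def IsPartitionOf (a b : ℝ) (θ : Finset ℝ) : Prop :=
  a ∈ θ ∧ b ∈ θ ∧ ∀ x ∈ θ, x ∈ Set.Icc a b

/-! On `Ω` the increments of `X` are those of `P` applied to one vector `ξ = X t Ω`, and `x' ∈ A'`
commutes with every operator in sight, so `S_θ (x' Ω) = x' (T_θ ξ)` for the integral sum
`T_θ = ∑ f (t_{k-1}) (P (t_k) - P (t_{k-1}))` of `f` against `P`. Since products of commuting
positive operators are positive, `T_θ` increases when `θ` is refined, and replacing `f` by a
constant operator above it makes the sum telescope to an upper bound of all the `T_θ`. A bounded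
increasing net of operators converges strongly, say `T_θ ξ → η`, so `S_θ (x' Ω) → x' η`, and the
limit for `y' x'` is `y'` applied to the limit for `x'` itself. -/

open Filter Set Topology
open scoped InnerProductSpace

section StrongConvergence

variable {𝕜 H : Type*} [RCLike 𝕜] [NormedAddCommGroup H] [InnerProductSpace 𝕜 H]

instance : IsOrderedAddMonoid (H →L[𝕜] H) where
  add_le_add_left _ _ h _ := by simpa only [ContinuousLinearMap.le_def, add_sub_add_right_eq_sub]

theorem norm_inner_apply_sq_le_of_nonneg {D : H →L[𝕜] H} (hD : 0 ≤ D) (x y : H) :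
    ‖⟪D x, y⟫_𝕜‖ ^ 2 ≤ RCLike.re ⟪D x, x⟫_𝕜 * RCLike.re ⟪D y, y⟫_𝕜 := by
  have hpos := (ContinuousLinearMap.nonneg_iff_isPositive D).1 hD
  let form : PreInnerProductSpace.Core 𝕜 H :=
    { inner x y := ⟪D x, y⟫_𝕜
      conj_inner_symm x y := by rw [inner_conj_symm, hpos.inner_left_eq_inner_right]
      re_inner_nonneg x := hpos.re_inner_nonneg_left x
      add_left x y z := by rw [map_add, inner_add_left]
      smul_left x y r := by rw [map_smul, inner_smul_left] }
  have hsymm : ‖⟪D x, y⟫_𝕜‖ = ‖⟪D y, x⟫_𝕜‖ := by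
    rw [hpos.inner_left_eq_inner_right, norm_inner_symm]
  calc ‖⟪D x, y⟫_𝕜‖ ^ 2 = ‖⟪D x, y⟫_𝕜‖ * ‖⟪D y, x⟫_𝕜‖ := by rw [sq, ← hsymm]
    _ ≤ _ := InnerProductSpace.Core.inner_mul_inner_self_le (c := form) x y

theorem re_inner_apply_self_mono (x : H) :
    Monotone fun D : H →L[𝕜] H ↦ RCLike.re ⟪D x, x⟫_𝕜 := fun D C hDC ↦ by
  have := ((ContinuousLinearMap.le_def D C).1 hDC).re_inner_nonneg_left x
  rwa [sub_apply, inner_sub_left, map_sub, sub_nonneg] at this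

theorem norm_apply_sq_le_of_nonneg_of_le {D C : H →L[𝕜] H} (hD : 0 ≤ D) (hDC : D ≤ C) (x : H) :
    ‖D x‖ ^ 2 ≤ ‖C‖ * RCLike.re ⟪D x, x⟫_𝕜 := by
  have hnonneg : 0 ≤ RCLike.re ⟪D x, x⟫_𝕜 := by simpa using re_inner_apply_self_mono x hD
  have hDD : RCLike.re ⟪D (D x), D x⟫_𝕜 ≤ ‖C‖ * ‖D x‖ ^ 2 :=
    calc RCLike.re ⟪D (D x), D x⟫_𝕜 ≤ RCLike.re ⟪C (D x), D x⟫_𝕜 := re_inner_apply_self_mono _ hDC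
      _ ≤ ‖C (D x)‖ * ‖D x‖ := re_inner_le_norm _ _
      _ ≤ ‖C‖ * ‖D x‖ * ‖D x‖ := by gcongr; exact C.le_opNorm _
      _ = ‖C‖ * ‖D x‖ ^ 2 := by ring
  rcases (norm_nonneg (D x)).eq_or_lt with hzero | hDx
  · rw [← hzero, zero_pow two_ne_zero]
    positivity
  · refine le_of_mul_le_mul_right ?_ (pow_pos hDx 2)
    calc ‖D x‖ ^ 2 * ‖D x‖ ^ 2 = ‖⟪D x, D x⟫_𝕜‖ ^ 2 := by
          rw [← inner_self_re_eq_norm, inner_self_eq_norm_sq (𝕜 := 𝕜), ← sq]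
      _ ≤ RCLike.re ⟪D x, x⟫_𝕜 * RCLike.re ⟪D (D x), D x⟫_𝕜 :=
        norm_inner_apply_sq_le_of_nonneg hD _ _
      _ ≤ RCLike.re ⟪D x, x⟫_𝕜 * (‖C‖ * ‖D x‖ ^ 2) := by gcongr
      _ = ‖C‖ * RCLike.re ⟪D x, x⟫_𝕜 * ‖D x‖ ^ 2 := by ring

theorem exists_tendsto_apply_of_monotone_of_bddAbove [CompleteSpace H] {ι : Type*}
    [SemilatticeSup ι] [Nonempty ι] {T : ι → H →L[𝕜] H} (hT : Monotone T)
    (hbdd : BddAbove (range T)) (ξ : H) : ∃ η, Tendsto (fun i ↦ T i ξ) atTop (𝓝 η) := by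
  obtain ⟨K, hK⟩ := hbdd
  obtain ⟨i₀⟩ := ‹Nonempty ι›
  let φ : Ici i₀ → ℝ := fun i ↦ RCLike.re ⟪T i ξ, ξ⟫_𝕜
  have hφ_mono : Monotone φ := fun i j hij ↦ re_inner_apply_self_mono ξ (hT hij)
  have hφ_bdd : BddAbove (range φ) :=
    ⟨_, forall_mem_range.2 fun i ↦ re_inner_apply_self_mono ξ (hK ⟨i, rfl⟩)⟩
  let gap : Ici i₀ → ℝ := fun i ↦ √(‖K - T i₀‖ * ((⨆ j, φ j) - φ i))
  have hgap : Tendsto gap atTop (𝓝 0) := by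
    have hgap_sq := ((tendsto_atTop_ciSup hφ_mono hφ_bdd).const_sub (⨆ j, φ j)).const_mul
      ‖K - T i₀‖
    rw [sub_self, mul_zero] at hgap_sq
    simpa only [Real.sqrt_zero] using hgap_sq.sqrt
  have hdist : ∀ i j : Ici i₀, i ≤ j → dist (T i ξ) (T j ξ) ≤ gap i := fun i j hij ↦ by
    refine Real.le_sqrt_of_sq_le ?_
    calc dist (T i ξ) (T j ξ) ^ 2 = ‖(T j - T i) ξ‖ ^ 2 := by rw [dist_comm, dist_eq_norm]; rfl
      _ ≤ ‖K - T i₀‖ * RCLike.re ⟪(T j - T i) ξ, ξ⟫_𝕜 :=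
        norm_apply_sq_le_of_nonneg_of_le (sub_nonneg.2 (hT hij))
          (sub_le_sub (hK ⟨j, rfl⟩) (hT i.2)) ξ
      _ = ‖K - T i₀‖ * (φ j - φ i) := by rw [sub_apply, inner_sub_left, map_sub]
      _ ≤ ‖K - T i₀‖ * ((⨆ j, φ j) - φ i) := by gcongr; exact le_ciSup hφ_bdd j
  obtain ⟨η, hη⟩ := cauchySeq_tendsto_of_complete (cauchySeq_of_le_tendsto_0' gap hdist hgap)
  exact ⟨η, tendsto_comp_val_Ici_atTop.1 hη⟩

end StrongConvergence

section StepSum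

variable {α E F : Type*}

/-- The sum of `g x y` over the pairs `(x, y)` of consecutive entries of a list: the integral sums
over a partition are of this form, `g` giving the contribution of one subinterval. -/
def stepSum [AddMonoid E] (g : α → α → E) (l : List α) : E :=
  (l.consecutivePairs.map fun p ↦ g p.1 p.2).sum

@[simp]
theorem stepSum_singleton [AddMonoid E] (g : α → α → E) (a : α) : stepSum g [a] = 0 := rfl

@[simp]
theorem stepSum_cons_cons [AddMonoid E] (g : α → α → E) (a b : α) (l : List α) :
    stepSum g (a :: b :: l) = g a b + stepSum g (b :: l) := rfl

theorem map_stepSum [AddMonoid E] [AddMonoid F] {Φ : Type*} [FunLike Φ E F]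
    [AddMonoidHomClass Φ E F] (φ : Φ) (g : α → α → E) (l : List α) :
    φ (stepSum g l) = stepSum (fun x y ↦ φ (g x y)) l := by
  rw [stepSum, map_list_sum, List.map_map]
  rfl

theorem stepSum_congr [AddMonoid E] {g g' : α → α → E} {l : List α}
    (h : ∀ x ∈ l, ∀ y ∈ l, g x y = g' x y) : stepSum g l = stepSum g' l :=
  congrArg List.sum <| List.map_congr_left fun _ hp ↦
    have hmem := List.of_mem_zip hp
    h _ hmem.1 _ (List.mem_of_mem_tail hmem.2)

theorem stepSum_le_of_sublist [AddMonoid E] [Preorder E] [AddLeftMono E] [AddRightMono E]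
    [Preorder α] {g : α → α → E} {s : Set α} {b : α} {l₁ l₂ : List α}
    (hg : ∀ x ∈ s, ∀ y ∈ s, ∀ z ∈ s, x ≤ y → y ≤ z → g x z ≤ g x y + g y z)
    (h : l₁.Sublist l₂) {a : α} (hsorted : (a :: (l₂ ++ [b])).Pairwise (· ≤ ·))
    (hmem : ∀ x ∈ a :: (l₂ ++ [b]), x ∈ s) :
    stepSum g (a :: (l₁ ++ [b])) ≤ stepSum g (a :: (l₂ ++ [b])) := by
  induction h generalizing a with
  | slnil => rfl
  | @cons l₁ l₂ c h ih =>
    obtain ⟨ha, hc⟩ := List.pairwise_cons.1 hsorted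
    obtain ⟨ha_mem, hc_mem⟩ := List.forall_mem_cons.1 hmem
    obtain ⟨d, l, hd⟩ := List.exists_cons_of_ne_nil (l := l₁ ++ [b]) (by simp)
    have hd_mem : d ∈ l₂ ++ [b] := (h.append_right [b]).subset (by simp [hd])
    calc stepSum g (a :: (l₁ ++ [b])) = g a d + stepSum g (d :: l) := by rw [hd, stepSum_cons_cons]
      _ ≤ g a c + g c d + stepSum g (d :: l) := by
        gcongr
        exact hg a ha_mem c (hc_mem c (by simp)) d (hc_mem d (by simp [hd_mem]))
          (ha c (by simp)) ((List.pairwise_cons.1 hc).1 d hd_mem)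
      _ = g a c + stepSum g (c :: (l₁ ++ [b])) := by rw [hd, stepSum_cons_cons, add_assoc]
      _ ≤ g a c + stepSum g (c :: (l₂ ++ [b])) := by gcongr; exact ih hc hc_mem
  | @cons_cons l₁ l₂ c _ ih =>
    simp only [List.cons_append, stepSum_cons_cons]
    gcongr
    exact ih (List.pairwise_cons.1 hsorted).2 (List.forall_mem_cons.1 hmem).2

theorem stepSum_le_sub [AddCommGroup E] [Preorder E] [AddLeftMono E] [Preorder α]
    {g : α → α → E} {k : α → E} {s : Set α} {b : α}
    (hg : ∀ x ∈ s, ∀ y ∈ s, x ≤ y → g x y ≤ k y - k x) (l : List α) {a : α}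
    (hsorted : (a :: (l ++ [b])).Pairwise (· ≤ ·)) (hmem : ∀ x ∈ a :: (l ++ [b]), x ∈ s) :
    stepSum g (a :: (l ++ [b])) ≤ k b - k a := by
  induction l generalizing a with
  | nil => simpa using hg a (hmem a (by simp)) b (hmem b (by simp)) (by simpa using hsorted)
  | cons c l ih =>
    obtain ⟨ha, hc⟩ := List.pairwise_cons.1 hsorted
    obtain ⟨ha_mem, hc_mem⟩ := List.forall_mem_cons.1 hmem
    calc stepSum g (a :: (c :: l ++ [b])) = g a c + stepSum g (c :: (l ++ [b])) := rfl
      _ ≤ (k c - k a) + (k b - k c) :=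
        add_le_add (hg a ha_mem c (hc_mem c (by simp)) (ha c (by simp))) (ih hc hc_mem)
      _ = k b - k a := by abel

end StepSum

section Partition

variable {a b : ℝ} {θ : Finset ℝ}

namespace IsPartitionOf

theorem union {θ' : Finset ℝ} (h : IsPartitionOf a b θ) (h' : IsPartitionOf a b θ') :
    IsPartitionOf a b (θ ∪ θ') :=
  ⟨Finset.mem_union_left _ h.1, Finset.mem_union_left _ h.2.1,
    fun x hx ↦ (Finset.mem_union.1 hx).elim (h.2.2 x) (h'.2.2 x)⟩

theorem pair (hab : a ≤ b) : IsPartitionOf a b {a, b} := by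
  simp [IsPartitionOf, hab]

theorem sort_eq (hab : a < b) (h : IsPartitionOf a b θ) :
    θ.sort = a :: (((θ.erase a).erase b).sort ++ [b]) := by
  obtain ⟨ha, hb, hmem⟩ := h
  have hinner : ∀ x ∈ (θ.erase a).erase b, a < x ∧ x < b := fun x hx ↦ by
    obtain ⟨hxb, hxa, hx⟩ : x ≠ b ∧ x ≠ a ∧ x ∈ θ := by simpa only [Finset.mem_erase] using hx
    exact ⟨(hmem x hx).1.lt_of_ne' hxa, (hmem x hx).2.lt_of_ne hxb⟩
  refine (Finset.sortedLT_sort θ).eq_of_mem_iff (List.Pairwise.sortedLT ?_) fun x ↦ ?_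
  · simp only [List.pairwise_cons, List.pairwise_append, List.mem_append, Finset.mem_sort,
      List.mem_singleton]
    exact ⟨by grind, (Finset.sortedLT_sort _).pairwise, by simp, by grind⟩
  · simp only [List.mem_cons, List.mem_append, Finset.mem_sort, Finset.mem_erase]
    grind

end IsPartitionOf

/-- The partitions of `[a, b]`, ordered by refinement. -/
abbrev IntervalPartition (a b : ℝ) : Type := {θ : Finset ℝ // IsPartitionOf a b θ}

noncomputable instance : SemilatticeSup (IntervalPartition a b) :=
  Subtype.semilatticeSup fun _ _ ↦ IsPartitionOf.union

theorem nonempty_intervalPartition (hab : a ≤ b) : Nonempty (IntervalPartition a b) :=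
  ⟨{a, b}, IsPartitionOf.pair hab⟩

theorem tendsto_intervalPartition_iff {E : Type*} [SeminormedAddCommGroup E] (hab : a ≤ b)
    {u : Finset ℝ → E} {y : E} :
    Tendsto (fun θ : IntervalPartition a b ↦ u θ) atTop (𝓝 y) ↔
      ∀ ε > (0 : ℝ), ∃ θ₀ : Finset ℝ, IsPartitionOf a b θ₀ ∧
        ∀ θ : Finset ℝ, IsPartitionOf a b θ → θ₀ ⊆ θ → ‖u θ - y‖ < ε := by
  have := nonempty_intervalPartition hab
  rw [Metric.tendsto_atTop]
  simp only [dist_eq_norm, Subtype.exists, Subtype.forall, ge_iff_le, Subtype.mk_le_mk,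
    exists_prop]

theorem sort_sublist_sort {α : Type*} [LinearOrder α] {s t : Finset α} (h : s ⊆ t) :
    s.sort.Sublist t.sort := by
  refine List.sublist_of_subperm_of_sortedLE (List.subperm_of_subset (s.sort_nodup _) ?_)
    s.sortedLT_sort.sortedLE t.sortedLT_sort.sortedLE
  exact fun x hx ↦ (Finset.mem_sort _).2 (h ((Finset.mem_sort _).1 hx))

theorem stepSum_sort_mono {E : Type*} [AddMonoid E] [Preorder E] [AddLeftMono E] [AddRightMono E]
    (hab : a < b) {g : ℝ → ℝ → E}
    (hg : ∀ x ∈ Icc a b, ∀ y ∈ Icc a b, ∀ z ∈ Icc a b, x ≤ y → y ≤ z → g x z ≤ g x y + g y z) :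
    Monotone fun θ : IntervalPartition a b ↦ stepSum g θ.1.sort := by
  rintro ⟨θ₁, h₁⟩ ⟨θ₂, h₂⟩ (hθ : θ₁ ⊆ θ₂)
  have hsorted := θ₂.pairwise_sort (· ≤ ·)
  have hmem : ∀ x ∈ θ₂.sort, x ∈ Icc a b := by simpa using h₂.2.2
  simp only [h₁.sort_eq hab]
  simp only [h₂.sort_eq hab] at hsorted hmem ⊢
  exact stepSum_le_of_sublist hg
    (sort_sublist_sort (Finset.erase_subset_erase _ (Finset.erase_subset_erase _ hθ))) hsorted hmem

theorem stepSum_sort_le_sub {E : Type*} [AddCommGroup E] [Preorder E] [AddLeftMono E]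
    (hab : a < b) {g : ℝ → ℝ → E} {k : ℝ → E}
    (hg : ∀ x ∈ Icc a b, ∀ y ∈ Icc a b, x ≤ y → g x y ≤ k y - k x) (h : IsPartitionOf a b θ) :
    stepSum g θ.sort ≤ k b - k a := by
  have hsorted := θ.pairwise_sort (· ≤ ·)
  have hmem : ∀ x ∈ θ.sort, x ∈ Icc a b := by simpa using h.2.2
  rw [h.sort_eq hab] at hsorted hmem ⊢
  exact stepSum_le_sub hg _ hsorted hmem

end Partition

theorem mul_le_mul_of_commute_sub {R : Type*} [NonUnitalCStarAlgebra R] [PartialOrder R]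
    [StarOrderedRing R] {x y z : R} (hxy : x ≤ y) (hz : 0 ≤ z) (hcomm : Commute (y - x) z) :
    x * z ≤ y * z := by
  rw [← sub_nonneg, ← sub_mul]
  exact hcomm.mul_nonneg (sub_nonneg.2 hxy) hz

section IntegralSum

variable {H : Type*} [NormedAddCommGroup H] [InnerProductSpace ℂ H] {a b : ℝ}
  {f P X : ℝ → H →L[ℂ] H}

theorem sigmaSum_eq_stepSum (f X : ℝ → H →L[ℂ] H) (θ : Finset ℝ) :
    sigmaSum f X θ = stepSum (fun r s ↦ f r * (X s - X r)) θ.sort := rfl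

theorem sigmaSum_apply_eq_stepSum (f X : ℝ → H →L[ℂ] H) (θ : Finset ℝ) (v : H) :
    sigmaSum f X θ v = stepSum (fun r s ↦ f r (X s v - X r v)) θ.sort := by
  rw [sigmaSum_eq_stepSum]
  exact map_stepSum (ContinuousLinearMap.apply ℂ H v) (fun r s ↦ f r * (X s - X r)) θ.sort

theorem sigmaSum_apply_apply_of_mem_centralizer {θ : Finset ℝ} {S : Set (H →L[ℂ] H)} {Ω ξ : H}
    {x' : H →L[ℂ] H} (hf : ∀ s ∈ θ, f s ∈ S) (hX : ∀ s ∈ θ, X s ∈ S) (hξ : ∀ s ∈ θ, X s Ω = P s ξ)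
    (hx' : x' ∈ S.centralizer) : sigmaSum f X θ (x' Ω) = x' (sigmaSum f P θ ξ) := by
  have hswap : ∀ y ∈ S, ∀ v, y (x' v) = x' (y v) := fun y hy v ↦ DFunLike.congr_fun (hx' y hy) v
  rw [sigmaSum_apply_eq_stepSum, sigmaSum_apply_eq_stepSum, map_stepSum]
  refine stepSum_congr fun r hr s hs ↦ ?_
  rw [Finset.mem_sort] at hr hs
  rw [hswap _ (hX s hs), hswap _ (hX r hr), ← map_sub, hswap _ (hf r hr), hξ r hr, hξ s hs]

variable [CompleteSpace H]

theorem sigmaSum_mono (hab : a < b) (hf : MonotoneOn f (Icc a b)) (hP : MonotoneOn P (Icc a b))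
    (hcomm : ∀ s ∈ Icc a b, ∀ u ∈ Icc a b, s ≤ u → Commute (f s) (P u)) :
    Monotone fun θ : IntervalPartition a b ↦ sigmaSum f P θ := by
  simp only [sigmaSum_eq_stepSum]
  refine stepSum_sort_mono hab fun x hx y hy z hz hxy hyz ↦ ?_
  have hcomm_sub : Commute (f y - f x) (P z - P y) :=
    ((hcomm y hy z hz hyz).sub_right (hcomm y hy y hy le_rfl)).sub_left
      ((hcomm x hx z hz (hxy.trans hyz)).sub_right (hcomm x hx y hy hxy))
  calc f x * (P z - P x) = f x * (P y - P x) + f x * (P z - P y) := by noncomm_ring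
    _ ≤ f x * (P y - P x) + f y * (P z - P y) := by
      gcongr
      exact mul_le_mul_of_commute_sub (hf hx hy hxy) (sub_nonneg.2 (hP hy hz hyz)) hcomm_sub

theorem bddAbove_range_sigmaSum (hab : a < b) (hf : MonotoneOn f (Icc a b))
    (hP : MonotoneOn P (Icc a b))
    (hcomm : ∀ s ∈ Icc a b, ∀ u ∈ Icc a b, s ≤ u → Commute (f s) (P u)) :
    BddAbove (range fun θ : IntervalPartition a b ↦ sigmaSum f P θ) := by
  have ha := left_mem_Icc.2 hab.le
  have hb := right_mem_Icc.2 hab.le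
  let K : H →L[ℂ] H := algebraMap ℝ _ ‖f b - f a‖ + f a
  refine ⟨K * P b - K * P a, forall_mem_range.2 fun θ ↦ ?_⟩
  simp only [sigmaSum_eq_stepSum]
  refine stepSum_sort_le_sub (k := fun s ↦ K * P s) hab (fun x hx y hy hxy ↦ ?_) θ.2
  have hfK : f x ≤ K := by
    have hba : IsSelfAdjoint (f b - f a) := .of_nonneg (sub_nonneg.2 (hf ha hb hab.le))
    rw [← sub_le_iff_le_add]
    exact (sub_le_sub_right (hf hx hb hx.2) _).trans hba.le_algebraMap_norm_self
  have hcomm_sub : Commute (K - f x) (P y - P x) := by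
    have hcomm_at : ∀ u ∈ Icc a b, x ≤ u → Commute (K - f x) (P u) := fun u hu hxu ↦
      ((Algebra.commute_algebraMap_left _ _).add_left (hcomm a ha u hu hu.1)).sub_left
        (hcomm x hx u hu hxu)
    exact (hcomm_at y hy hxy).sub_right (hcomm_at x hx le_rfl)
  rw [← mul_sub]
  exact mul_le_mul_of_commute_sub hfK (sub_nonneg.2 (hP hx hy hxy)) hcomm_sub

end IntegralSum

theorem right_integral_exists_monotone_general
    {H : Type*} [NormedAddCommGroup H] [InnerProductSpace ℂ H] [CompleteSpace H]
    {S : Set (H →L[ℂ] H)} {Ω ξ : H} {f P X : ℝ → H →L[ℂ] H} {a b : ℝ} (hab : a < b)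
    (hP : MonotoneOn P (Icc a b)) (hf_mem : ∀ s ∈ Icc a b, f s ∈ S) (hf : MonotoneOn f (Icc a b))
    (hcomm : ∀ s ∈ Icc a b, ∀ u ∈ Icc a b, s ≤ u → Commute (f s) (P u))
    (hX_mem : ∀ s ∈ Icc a b, X s ∈ S) (hX : ∀ s ∈ Icc a b, X s Ω = P s ξ) :
    ∃ I : H → H,
      (∀ x' ∈ S.centralizer,
        Tendsto (fun θ : IntervalPartition a b ↦ sigmaSum f X θ (x' Ω)) atTop (𝓝 (I (x' Ω)))) ∧
      ∀ x' ∈ S.centralizer, ∀ y' ∈ S.centralizer, I ((y' * x') Ω) = y' (I (x' Ω)) := by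
  have := nonempty_intervalPartition hab.le
  obtain ⟨η, hη⟩ := exists_tendsto_apply_of_monotone_of_bddAbove
    (sigmaSum_mono hab hf hP hcomm) (bddAbove_range_sigmaSum hab hf hP hcomm) ξ
  have hlim : ∀ x' ∈ S.centralizer,
      Tendsto (fun θ : IntervalPartition a b ↦ sigmaSum f X θ (x' Ω)) atTop (𝓝 (x' η)) := by
    refine fun x' hx' ↦ ((x'.continuous.tendsto η).comp hη).congr fun θ ↦ ?_
    exact (sigmaSum_apply_apply_of_mem_centralizer (fun s hs ↦ hf_mem s (θ.2.2.2 s hs))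
      (fun s hs ↦ hX_mem s (θ.2.2.2 s hs)) (fun s hs ↦ hX s (θ.2.2.2 s hs)) hx').symm
  -- Different `x'` may give the same vector `x' Ω`, so `I` is defined as a limit depending on the
  -- vector only and not by `x' Ω ↦ x' η`.
  let I : H → H := fun v ↦ limUnder atTop fun θ : IntervalPartition a b ↦ sigmaSum f X θ v
  have hI : ∀ x' ∈ S.centralizer, I (x' Ω) = x' η := fun x' hx' ↦ (hlim x' hx').limUnder_eq
  refine ⟨I, fun x' hx' ↦ (hI x' hx').symm ▸ hlim x' hx', fun x' hx' y' hy' ↦ ?_⟩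
  rw [hI _ (mul_mem_centralizer hy' hx'), hI x' hx', mul_apply_eq_comp]

/-- For a von Neumann algebra A, a vector Ω, increasing projections (P_t),
an A-valued hermitian increasing adapted-commuting f, and X : [0,t] → A with
X(s)Ω = P_s(X(t)Ω), the net of vectors S_θ(x'Ω) indexed by partitions of [0,t] directed
by refinement converges in norm for every x' ∈ A', and the limit I satisfies
I((y'x')Ω) = y' I(x'Ω). -/
theorem right_integral_exists_monotone
    {H : Type*} [NormedAddCommGroup H] [InnerProductSpace ℂ H] [CompleteSpace H]
    (A : VonNeumannAlgebra H) (Ω : H)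
    (P : ℝ → H →L[ℂ] H)
    (hP_proj : ∀ s, 0 ≤ s → IsSelfAdjoint (P s) ∧ P s ∘L P s = P s)
    (hP_mono : ∀ s u, 0 ≤ s → s ≤ u → P s ∘L P u = P s ∧ P u ∘L P s = P s)
    (f : ℝ → H →L[ℂ] H)
    (hf_mem : ∀ s, 0 ≤ s → f s ∈ A)
    (hf_herm : ∀ s, 0 ≤ s → IsSelfAdjoint (f s))
    (hf_incr : ∀ u v, 0 ≤ u → u ≤ v → (f v - f u).IsPositive)
    (hf_adapted : ∀ s u, 0 ≤ s → s ≤ u → f s ∘L P u = P u ∘L f s)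
    (t : ℝ) (ht : 0 < t)
    (X : ℝ → H →L[ℂ] H)
    (hX_mem : ∀ s ∈ Set.Icc (0 : ℝ) t, X s ∈ A)
    (hX_mart : ∀ s, 0 ≤ s → s ≤ t → X s Ω = P s (X t Ω)) :
    ∃ I : H → H,
      (∀ x' ∈ A.commutant, ∀ ε > (0 : ℝ), ∃ θ₀ : Finset ℝ, IsPartitionOf 0 t θ₀ ∧
        ∀ θ : Finset ℝ, IsPartitionOf 0 t θ → θ₀ ⊆ θ →
          ‖sigmaSum f X θ (x' Ω) - I (x' Ω)‖ < ε) ∧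
      (∀ x' ∈ A.commutant, ∀ y' ∈ A.commutant,
        I ((y' * x') Ω) = y' (I (x' Ω))) := by
  have hP (s : ℝ) (hs : 0 ≤ s) : IsStarProjection (P s) := ⟨(hP_proj s hs).2, (hP_proj s hs).1⟩
  obtain ⟨I, hlim, hI⟩ := right_integral_exists_monotone_general (S := A) ht
    (fun s hs u hu hsu ↦ (hP s hs.1).le_of_mul_eq_left (hP u hu.1) (hP_mono s u hs.1 hsu).1)
    (fun s hs ↦ hf_mem s hs.1) (fun s hs u _ hsu ↦ hf_incr s u hs.1 hsu)
    (fun s hs u _ hsu ↦ hf_adapted s u hs.1 hsu) hX_mem (fun s hs ↦ hX_mart s hs.1 hs.2)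
  simp only [← VonNeumannAlgebra.coe_commutant, SetLike.mem_coe] at hlim hI
  exact ⟨I, fun x' hx' ↦ (tendsto_intervalPartition_iff ht.le).1 (hlim x' hx'), hI⟩
end

section
/- Let A be a von Neumann algebra acting on H, let Ω ∈ H, and let (P_t)_{t≥0} be an increasing family of orthogonal projections on H. Let f : [0,∞) → B(H) take values in A, be norm-continuous, and adapted-commuting with respect to (P_t). Fix t > 0 and let X : [0,t] → A satisfy X(s)Ω = P_s (X(t)Ω) for all 0 ≤ s ≤ t. For a partition θ = {0 = t_0 < ⋯ < t_m = t} of [0,t] set S_θ = Σ_{k=1}^m f(t_{k−1})(X(t_k) − X(t_{k−1})). Then for every x' in the commutant A' of A there exists v ∈ H such that for every ε > 0 there is δ > 0 with ‖S_θ (x'Ω) − v‖ < ε for every partition θ of [0,t] of mesh less than δ; moreover, denoting this limit by I(x'Ω), one has I((y' x')Ω) = y' I(x'Ω) for all x', y' ∈ A'. -/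
/-- `meshOf θ` is the mesh max_{1≤k≤m}(t_k − t_{k−1}) of the partition θ. -/
noncomputable def meshOf (θ : Finset ℝ) : ℝ :=
  (((θ.sort (· ≤ ·)).zip (θ.sort (· ≤ ·)).tail).map (fun p => p.2 - p.1)).foldr max 0

/-!
An operator `x'` of the commutant commutes with every `f s` and `X s`, and `X s Ω = P s (X t Ω)`, so
`S_θ (x' Ω) = x' (T_θ (X t Ω))` with `T_θ = ∑ f(t_{k-1}) (P(t_k) - P(t_{k-1}))`. It therefore
suffices that `T_θ` converges in norm, which holds in any C⋆-algebra. By adaptedness, the summands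
of `∑ g(t_{k-1}) (P(t_k) - P(t_{k-1}))` have pairwise orthogonal supports and pairwise orthogonal
ranges, so the norm of the sum is at most `max ‖g(t_{k-1})‖`. If `η` refines `θ`, then `T_θ` is the
sum over `η` in which each `f s` is replaced by the value of `f` at the last point of `θ` that is at
most `s`; hence `‖T_θ - T_η‖` is bounded by the modulus of continuity of `f` at the mesh of `θ`.
-/

open Filter Topology Set

lemma norm_add_eq_max_of_star_mul_eq_zero {R : Type*} [NonUnitalCStarAlgebra R]
    {x y : R} (hxy : star x * y = 0) (hxy' : x * star y = 0) : ‖x + y‖ = max ‖x‖ ‖y‖ := by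
  have hyx : star y * x = 0 := by simpa using congrArg star hxy
  have hmul : (star x * x) * (star y * y) = 0 := by
    rw [mul_assoc, ← mul_assoc x, hxy', zero_mul, mul_zero]
  have hsq : ‖x + y‖ * ‖x + y‖ = max ‖x‖ ‖y‖ * max ‖x‖ ‖y‖ :=
    calc ‖x + y‖ * ‖x + y‖ = ‖star x * x + star y * y‖ := by
          rw [← CStarRing.norm_star_mul_self, star_add, add_mul, mul_add, mul_add, hxy, hyx,
            add_zero, zero_add]
      _ = max (‖x‖ * ‖x‖) (‖y‖ * ‖y‖) := by
          rw [(IsSelfAdjoint.star_mul_self x).norm_add_eq_max (.star_mul_self y) hmul,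
            CStarRing.norm_star_mul_self, CStarRing.norm_star_mul_self]
      _ = max ‖x‖ ‖y‖ * max ‖x‖ ‖y‖ := by
          rcases le_total ‖x‖ ‖y‖ with h | h <;>
            simp [h, mul_self_le_mul_self, norm_nonneg]
  exact (mul_self_inj (norm_nonneg _) (le_max_of_le_left (norm_nonneg _))).mp hsq

section RiemannStieltjesSum

variable {α R : Type*}

/-- The left Riemann–Stieltjes sum `∑ g(t_{k-1}) (Y(t_k) - Y(t_{k-1}))` along the list of points
`t₀, t₁, …, tₘ`; `sigmaSum f X θ` is its value on the increasing enumeration of `θ`. -/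
def leftSum [NonUnitalNonAssocRing R] (g Y : α → R) (l : List α) : R :=
  (l.consecutivePairs.map fun p ↦ g p.1 * (Y p.2 - Y p.1)).sum

section Ring

variable [NonUnitalNonAssocRing R] (g h Y : α → R)

@[simp]
lemma leftSum_nil : leftSum g Y [] = 0 := rfl

@[simp]
lemma leftSum_singleton (a : α) : leftSum g Y [a] = 0 := rfl

@[simp]
lemma leftSum_cons_cons (a b : α) (l : List α) :
    leftSum g Y (a :: b :: l) = g a * (Y b - Y a) + leftSum g Y (b :: l) := rfl

variable {g h} in
lemma leftSum_congr {l : List α} (hgh : ∀ x ∈ l, g x = h x) : leftSum g Y l = leftSum h Y l := by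
  refine congrArg List.sum (List.map_congr_left fun p hp ↦ ?_)
  rw [hgh p.1 (List.of_mem_zip hp).1]

lemma leftSum_sub (l : List α) :
    leftSum (fun x ↦ g x - h x) Y l = leftSum g Y l - leftSum h Y l := by
  simp only [eq_sub_iff_add_eq, leftSum, ← List.sum_map_add, sub_mul, sub_add_cancel]

variable {g} in
lemma leftSum_cons_eq_of_sublist [LinearOrder α] {a : α} {k l : List α} (hkl : k.Sublist l)
    (hl : (a :: l).Pairwise (· < ·)) (hcover : ∀ x ∈ l, ∃ z ∈ k, x ≤ z)
    (hg : ∀ x ∈ a :: l, ∀ y ∈ a :: l, x ≤ y → (∀ z ∈ k, z ≤ x ∨ y < z) → g x = g y) :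
    leftSum g Y (a :: k) = leftSum g Y (a :: l) := by
  induction hkl generalizing a with
  | slnil => rfl
  | @cons k l b hkl ih =>
    obtain ⟨hal, hl⟩ := List.pairwise_cons.mp hl
    have hbl := (List.pairwise_cons.mp hl).1
    obtain ⟨c, k, rfl⟩ := List.exists_cons_of_ne_nil (l := k) <| by
      rintro rfl; simpa using hcover b List.mem_cons_self
    have hab : g a = g b := hg a (by simp) b (by simp) (hal b (by simp)).le
      fun z hz ↦ .inr (hbl z (hkl.subset hz))
    have hbk : leftSum g Y (b :: c :: k) = leftSum g Y (b :: l) :=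
      ih hl (fun x hx ↦ hcover x (List.mem_cons_of_mem b hx))
        fun x hx y hy ↦ hg x (List.mem_cons_of_mem a hx) y (List.mem_cons_of_mem a hy)
    rw [leftSum_cons_cons _ _ _ b, ← hbk, leftSum_cons_cons, leftSum_cons_cons, hab, ← add_assoc,
      ← mul_add, sub_add_sub_cancel']
  | @cons_cons k l b _ ih =>
    obtain ⟨-, hl⟩ := List.pairwise_cons.mp hl
    have hbl := (List.pairwise_cons.mp hl).1
    rw [leftSum_cons_cons, leftSum_cons_cons, ih hl]
    · intro x hx
      obtain ⟨z, hz, hxz⟩ := hcover x (List.mem_cons_of_mem b hx)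
      exact ⟨z, List.mem_of_ne_of_mem ((hbl x hx).trans_le hxz).ne' hz, hxz⟩
    · intro x hx y hy hxy hk
      refine hg x (List.mem_cons_of_mem a hx) y (List.mem_cons_of_mem a hy) hxy
        (List.forall_mem_cons.mpr ⟨.inl ?_, hk⟩)
      rcases List.mem_cons.mp hx with rfl | hx
      exacts [le_rfl, (hbl x hx).le]

end Ring

end RiemannStieltjesSum

section ProjectionFiltration

variable {α R : Type*} [Preorder α]

/-- `P` restricts on `S` to an increasing family of projections of a star ring. The order
`P s ≤ P u` is encoded as `P s * P u = P s`. -/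
structure IsProjectionFiltrationOn [Mul R] [Star R] (P : α → R) (S : Set α) : Prop where
  isStarProjection : ∀ s ∈ S, IsStarProjection (P s)
  mul_of_le : ∀ s ∈ S, ∀ u ∈ S, s ≤ u → P s * P u = P s

/-- The adaptedness condition on an integrand: `g s` commutes with the future projections `P u`,
`s ≤ u`. -/
def IsAdaptedOn [Mul R] (g P : α → R) (S : Set α) : Prop :=
  ∀ s ∈ S, ∀ u ∈ S, s ≤ u → Commute (g s) (P u)

variable {P g : α → R} {S : Set α} {a : α} {l : List α}

lemma IsProjectionFiltrationOn.mul_of_ge [Mul R] [StarMul R]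
    (hP : IsProjectionFiltrationOn P S) {s u : α} (hs : s ∈ S) (hu : u ∈ S) (hsu : s ≤ u) :
    P u * P s = P s := by
  simpa [(hP.isStarProjection s hs).isSelfAdjoint.star_eq,
    (hP.isStarProjection u hu).isSelfAdjoint.star_eq] using
      congrArg star (hP.mul_of_le s hs u hu hsu)

section Ring

variable [NonUnitalRing R] [StarMul R]

lemma leftSum_mul_eq_zero (hP : IsProjectionFiltrationOn P S) (hl : ∀ x ∈ l, x ∈ S) (ha : a ∈ S)
    (hal : ∀ x ∈ l, a ≤ x) : leftSum g P l * P a = 0 := by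
  have hterm : ∀ x ∈ l, P x * P a = P a := fun x hx ↦ hP.mul_of_ge ha (hl x hx) (hal x hx)
  rw [leftSum, ← List.sum_map_mul_right]
  refine List.sum_eq_zero (List.forall_mem_map.mpr fun p hp ↦ ?_)
  obtain ⟨hp₁, hp₂⟩ := List.of_mem_zip hp
  rw [mul_assoc, sub_mul, hterm p.1 hp₁, hterm p.2 (List.mem_of_mem_tail hp₂), sub_self, mul_zero]

lemma mul_leftSum_cons_eq_zero (hP : IsProjectionFiltrationOn P S) (hg : IsAdaptedOn g P S)
    (hl : ∀ x ∈ a :: l, x ∈ S) (hsort : (a :: l).Pairwise (· ≤ ·)) :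
    P a * leftSum g P (a :: l) = 0 := by
  induction l generalizing a with
  | nil => simp
  | cons b l ih =>
    obtain ⟨hab, hsort⟩ := List.pairwise_cons.mp hsort
    have ha := hl a (by simp)
    have hPP := hP.mul_of_le a ha b (hl b (by simp)) (hab b (by simp))
    have htail : P a * leftSum g P (b :: l) = 0 := by
      rw [← hPP, mul_assoc, ih (fun x hx ↦ hl x (List.mem_cons_of_mem a hx)) hsort, mul_zero]
    rw [leftSum_cons_cons, mul_add, htail, add_zero, ← mul_assoc, ← (hg a ha a ha le_rfl).eq,
      mul_assoc, mul_sub, hPP, hP.mul_of_le a ha a ha le_rfl, sub_self, mul_zero]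

end Ring

section CStarAlgebra

variable [NonUnitalCStarAlgebra R]

lemma norm_leftSum_cons_cons_le (hP : IsProjectionFiltrationOn P S) (hg : IsAdaptedOn g P S)
    {b : α} (hl : ∀ x ∈ a :: b :: l, x ∈ S) (hsort : (a :: b :: l).Pairwise (· ≤ ·)) :
    ‖leftSum g P (a :: b :: l)‖ ≤ max ‖g a‖ ‖leftSum g P (b :: l)‖ := by
  obtain ⟨hal, hsort⟩ := List.pairwise_cons.mp hsort
  obtain ⟨ha, hl⟩ := List.forall_mem_cons.mp hl
  have hb := hl b List.mem_cons_self
  have hab := hal b List.mem_cons_self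
  have hPb := hP.isStarProjection b hb
  have hPab : IsStarProjection (P b - P a) :=
    (hP.isStarProjection a ha).sub_of_mul_eq_left hPb (hP.mul_of_le a ha b hb hab)
  set x := g a * (P b - P a)
  set y := leftSum g P (b :: l)
  have hx_left : P b * x = x := by
    rw [← mul_assoc, ← (hg a ha b hb hab).eq, mul_assoc, mul_sub, hPb.isIdempotentElem,
      hP.mul_of_ge ha hb hab]
  have hx_right : x * P b = x := by
    rw [mul_assoc, sub_mul, hPb.isIdempotentElem, hP.mul_of_le a ha b hb hab]
  have hy_left : P b * y = 0 := mul_leftSum_cons_eq_zero hP hg hl hsort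
  have hy_right : y * P b = 0 := leftSum_mul_eq_zero hP hl hb
    (List.forall_mem_cons.mpr ⟨le_rfl, (List.pairwise_cons.mp hsort).1⟩)
  have hPb_star := hPb.isSelfAdjoint.star_eq
  have hxy : star x * y = 0 := by
    rw [← hx_left, star_mul, hPb_star, mul_assoc, hy_left, mul_zero]
  have hxy' : x * star y = 0 := by
    rw [← hx_right, mul_assoc, ← hPb_star, ← star_mul, hy_right, star_zero, mul_zero]
  have hx_norm : ‖x‖ ≤ ‖g a‖ :=
    (norm_mul_le _ _).trans (mul_le_of_le_one_right (norm_nonneg _) hPab.norm_le)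
  rw [leftSum_cons_cons, norm_add_eq_max_of_star_mul_eq_zero hxy hxy']
  exact max_le_max_right ‖y‖ hx_norm

lemma norm_leftSum_le (hP : IsProjectionFiltrationOn P S) (hg : IsAdaptedOn g P S)
    (hl : ∀ x ∈ l, x ∈ S) (hsort : l.Pairwise (· ≤ ·)) {C : ℝ} (hC : 0 ≤ C)
    (hgC : ∀ x ∈ l, ‖g x‖ ≤ C) : ‖leftSum g P l‖ ≤ C := by
  induction l with
  | nil => simpa using hC
  | cons a l ih =>
    rcases l with - | ⟨b, l⟩
    · simpa using hC
    obtain ⟨hga, hgl⟩ := List.forall_mem_cons.mp hgC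
    have htail := ih (List.forall_mem_cons.mp hl).2 (List.pairwise_cons.mp hsort).2 hgl
    exact (norm_leftSum_cons_cons_le hP hg hl hsort).trans (max_le hga htail)

end CStarAlgebra

end ProjectionFiltration

section Partition

variable {a b s : ℝ} {θ η : Finset ℝ}

lemma IsPartitionOf.union_s12 (hθ : IsPartitionOf a b θ) (hη : IsPartitionOf a b η) :
    IsPartitionOf a b (θ ∪ η) :=
  ⟨Finset.mem_union_left η hθ.1, Finset.mem_union_left η hθ.2.1,
    fun x hx ↦ (Finset.mem_union.mp hx).elim (hθ.2.2 x) (hη.2.2 x)⟩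

lemma IsPartitionOf.sort_eq_cons (hθ : IsPartitionOf a b θ) :
    θ.sort = a :: (θ.erase a).sort := by
  rw [← Finset.sort_insert (· ≤ ·) (fun x hx ↦ (hθ.2.2 x (Finset.mem_of_mem_erase hx)).1)
    (Finset.notMem_erase a θ), Finset.insert_erase hθ.1]

lemma meshOf_nonneg (θ : Finset ℝ) : 0 ≤ meshOf θ := by
  unfold meshOf
  generalize List.map _ _ = l
  induction l with
  | nil => exact le_rfl
  | cons x l ih => exact le_max_of_le_right ih

lemma sub_le_meshOf {p : ℝ × ℝ} (hp : p ∈ θ.sort.consecutivePairs) : p.2 - p.1 ≤ meshOf θ :=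
  List.le_max_of_le' 0 (List.mem_map_of_mem hp) le_rfl

lemma IsPartitionOf.meshOf_insert (hθ : IsPartitionOf a b θ) (hs : s < a) :
    meshOf (insert s θ) = max (a - s) (meshOf θ) := by
  have hsθ : ∀ x ∈ θ, s < x := fun x hx ↦ hs.trans_le (hθ.2.2 x hx).1
  have hsort : (insert s θ).sort = s :: θ.sort :=
    Finset.sort_insert _ (fun x hx ↦ (hsθ x hx).le) fun h ↦ (hsθ s h).false
  simp only [meshOf, hsort, hθ.sort_eq_cons, List.tail_cons, List.zip_cons_cons, List.map_cons,
    List.foldr_cons]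

lemma exists_isPartitionOf_meshOf_le {δ : ℝ} (hδ : 0 < δ) (n : ℕ) (hab : a ≤ b)
    (hn : b ≤ a + n * δ) : ∃ θ, IsPartitionOf a b θ ∧ meshOf θ ≤ δ := by
  have hsingleton : ∃ θ, IsPartitionOf b b θ ∧ meshOf θ ≤ δ :=
    ⟨{b}, by simp [IsPartitionOf], by simp [meshOf, hδ.le]⟩
  induction n generalizing a with
  | zero =>
    obtain rfl : a = b := hab.antisymm (by simpa using hn)
    exact hsingleton
  | succ n ih =>
    rcases hab.eq_or_lt with rfl | hlt
    · exact hsingleton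
    push_cast at hn
    obtain ⟨θ, hθ, hmesh⟩ := ih (a := min (a + δ) b) (min_le_right _ _) <| by
      rw [min_add]
      exact le_min (by linarith) (le_add_of_nonneg_right (by positivity))
    have ha : a < min (a + δ) b := lt_min (by linarith) hlt
    refine ⟨insert a θ, ⟨Finset.mem_insert_self a θ, Finset.mem_insert_of_mem hθ.2.1, ?_⟩, ?_⟩
    · exact (Finset.forall_mem_insert ..).mpr
        ⟨⟨le_rfl, hab⟩, fun x hx ↦ ⟨ha.le.trans (hθ.2.2 x hx).1, (hθ.2.2 x hx).2⟩⟩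
    · rw [hθ.meshOf_insert ha]
      exact max_le (by linarith [min_le_left (a + δ) b]) hmesh

/-- The largest point of `θ` that is at most `s`, or `0` when there is no such point. -/
noncomputable def partitionFloor (θ : Finset ℝ) (s : ℝ) : ℝ :=
  sSup {r | r ∈ θ ∧ r ≤ s}

lemma le_partitionFloor {r : ℝ} (hr : r ∈ θ) (hrs : r ≤ s) : r ≤ partitionFloor θ s :=
  le_csSup ⟨s, fun _ h ↦ h.2⟩ ⟨hr, hrs⟩

lemma IsPartitionOf.partitionFloor_mem (hθ : IsPartitionOf a b θ) (hs : a ≤ s) :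
    partitionFloor θ s ∈ θ ∧ partitionFloor θ s ≤ s :=
  Set.Nonempty.csSup_mem (s := {r | r ∈ θ ∧ r ≤ s}) ⟨a, hθ.1, hs⟩
    (θ.finite_toSet.subset fun _ h ↦ h.1)

lemma IsPartitionOf.partitionFloor_eq_self (hθ : IsPartitionOf a b θ) (hs : s ∈ θ) :
    partitionFloor θ s = s :=
  (hθ.partitionFloor_mem (hθ.2.2 s hs).1).2.antisymm (le_partitionFloor hs le_rfl)

lemma partitionFloor_eq_of_forall {x y : ℝ} (hxy : x ≤ y) (h : ∀ z ∈ θ, z ≤ x ∨ y < z) :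
    partitionFloor θ x = partitionFloor θ y :=
  congrArg sSup <| Set.ext fun z ↦ and_congr_right fun hz ↦
    ⟨fun hzx ↦ hzx.trans hxy, fun hzy ↦ (h z hz).resolve_right hzy.not_gt⟩

lemma exists_mem_consecutivePairs_le_le {α : Type*} [LinearOrder α] {a s : α} {l : List α}
    (has : a ≤ s) (hsl : ∃ y ∈ l, s ≤ y) :
    ∃ p ∈ (a :: l).consecutivePairs, p.1 ≤ s ∧ s ≤ p.2 := by
  induction l generalizing a with
  | nil => simp at hsl
  | cons c l ih =>
    rcases le_or_gt s c with hsc | hcs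
    · exact ⟨(a, c), List.mem_cons_self, has, hsc⟩
    · obtain ⟨y, hy, hsy⟩ := hsl
      obtain ⟨p, hp, hps⟩ :=
        ih hcs.le ⟨y, List.mem_of_ne_of_mem (hcs.trans_le hsy).ne' hy, hsy⟩
      exact ⟨p, List.mem_cons_of_mem _ hp, hps⟩

lemma IsPartitionOf.sub_partitionFloor_le (hθ : IsPartitionOf a b θ) (hs : s ∈ Icc a b) :
    s - partitionFloor θ s ≤ meshOf θ := by
  rcases hs.1.eq_or_lt with rfl | has
  · simpa [hθ.partitionFloor_eq_self hθ.1] using meshOf_nonneg θ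
  have hb : b ∈ (θ.erase a).sort := by simpa [(has.trans_le hs.2).ne'] using hθ.2.1
  obtain ⟨p, hp, hps, hsp⟩ := exists_mem_consecutivePairs_le_le hs.1 ⟨b, hb, hs.2⟩
  rw [← hθ.sort_eq_cons] at hp
  have hpθ : p.1 ∈ θ := (Finset.mem_sort _).mp (List.of_mem_zip hp).1
  linarith [le_partitionFloor hpθ hps, sub_le_meshOf hp]

/-- The filter on finite subsets of `ℝ` expressing convergence along the partitions of `[a, b]` as
their mesh tends to `0`. -/
noncomputable def partitionFilter (a b : ℝ) : Filter (Finset ℝ) :=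
  comap meshOf (𝓝 0) ⊓ 𝓟 {θ | IsPartitionOf a b θ}

lemma hasBasis_partitionFilter (a b : ℝ) :
    (partitionFilter a b).HasBasis (fun δ : ℝ ↦ 0 < δ)
      fun δ ↦ {θ | IsPartitionOf a b θ ∧ meshOf θ < δ} := by
  refine ((Metric.nhds_basis_ball.comap meshOf).inf_principal _).congr (fun _ ↦ Iff.rfl)
    fun δ _ ↦ Set.ext fun θ ↦ ?_
  simp [abs_of_nonneg (meshOf_nonneg θ), and_comm]

lemma partitionFilter_neBot (hab : a ≤ b) : (partitionFilter a b).NeBot := by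
  refine (hasBasis_partitionFilter a b).neBot_iff.mpr fun {δ} hδ ↦ ?_
  obtain ⟨n, hn⟩ := exists_nat_ge ((b - a) / (δ / 2))
  rw [div_le_iff₀ (by positivity)] at hn
  obtain ⟨θ, hθ, hmesh⟩ := exists_isPartitionOf_meshOf_le (half_pos hδ) n hab (by linarith)
  exact ⟨θ, hθ, by linarith⟩

end Partition

section Refinement

variable {R : Type*} {a b : ℝ} {θ η : Finset ℝ}

lemma IsPartitionOf.leftSum_partitionFloor [NonUnitalNonAssocRing R] (hθ : IsPartitionOf a b θ)
    (hη : IsPartitionOf a b η) (hθη : θ ⊆ η) (f Y : ℝ → R) :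
    leftSum (fun s ↦ f (partitionFloor θ s)) Y η.sort = leftSum f Y θ.sort := by
  have hsub : (θ.erase a).sort.Sublist (η.erase a).sort :=
    List.sublist_of_subperm_of_pairwise (r := (· ≤ ·))
      (List.subperm_of_subset (Finset.sort_nodup _ _) fun x hx ↦ (Finset.mem_sort _).mpr
        (Finset.erase_subset_erase a hθη ((Finset.mem_sort _).mp hx)))
      (Finset.pairwise_sort _ _) (Finset.pairwise_sort _ _)
  have hcover : ∀ x ∈ (η.erase a).sort, ∃ z ∈ (θ.erase a).sort, x ≤ z := by
    simp only [Finset.mem_sort, Finset.mem_erase]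
    intro x ⟨hxa, hx⟩
    obtain ⟨hax, hxb⟩ := hη.2.2 x hx
    exact ⟨b, ⟨((hax.lt_of_ne' hxa).trans_le hxb).ne', hθ.2.1⟩, hxb⟩
  rw [← leftSum_congr (g := fun s ↦ f (partitionFloor θ s)) Y fun x hx ↦
      congrArg f (hθ.partitionFloor_eq_self ((Finset.mem_sort _).mp hx)),
    hη.sort_eq_cons, hθ.sort_eq_cons]
  refine (leftSum_cons_eq_of_sublist Y hsub ?_ hcover fun x hx y _ hxy hgap ↦ ?_).symm
  · rw [← hη.sort_eq_cons]
    exact (Finset.sortedLT_sort η).pairwise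
  · refine congrArg f (partitionFloor_eq_of_forall hxy fun z hz ↦ ?_)
    rw [← hη.sort_eq_cons, Finset.mem_sort] at hx
    by_cases hza : z = a
    · exact .inl (hza ▸ (hη.2.2 x hx).1)
    · exact hgap z ((Finset.mem_sort _).mpr (Finset.mem_erase.mpr ⟨hza, hz⟩))

variable [NonUnitalCStarAlgebra R] {P f : ℝ → R}

lemma IsPartitionOf.dist_leftSum_le_of_subset (hP : IsProjectionFiltrationOn P (Icc a b))
    (hf : IsAdaptedOn f P (Icc a b)) {ε δ : ℝ} (hε : 0 ≤ ε)
    (hfδ : ∀ x ∈ Icc a b, ∀ y ∈ Icc a b, dist x y ≤ δ → dist (f x) (f y) ≤ ε)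
    (hθ : IsPartitionOf a b θ) (hη : IsPartitionOf a b η) (hθη : θ ⊆ η) (hmesh : meshOf θ ≤ δ) :
    dist (leftSum f P θ.sort) (leftSum f P η.sort) ≤ ε := by
  have hfloor : ∀ x ∈ Icc a b, partitionFloor θ x ∈ Icc a b ∧ partitionFloor θ x ≤ x := fun x hx ↦
    have h := hθ.partitionFloor_mem hx.1
    ⟨hθ.2.2 _ h.1, h.2⟩
  have hmem : ∀ x ∈ η.sort, x ∈ Icc a b := fun x hx ↦ hη.2.2 x ((Finset.mem_sort _).mp hx)
  have hadapted : IsAdaptedOn (fun s ↦ f (partitionFloor θ s) - f s) P (Icc a b) :=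
    fun s hs u hu hsu ↦ (hf _ (hfloor s hs).1 u hu ((hfloor s hs).2.trans hsu)).sub_left
      (hf s hs u hu hsu)
  rw [← hθ.leftSum_partitionFloor hη hθη, dist_eq_norm, ← leftSum_sub]
  refine norm_leftSum_le hP hadapted hmem (Finset.pairwise_sort _ _) hε fun x hx ↦ ?_
  have hx := hmem x hx
  rw [← dist_eq_norm]
  refine hfδ _ (hfloor x hx).1 x hx ?_
  rw [dist_comm, Real.dist_eq, abs_of_nonneg (sub_nonneg.mpr (hfloor x hx).2)]
  exact (hθ.sub_partitionFloor_le hx).trans hmesh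

theorem exists_tendsto_leftSum (hab : a ≤ b) (hP : IsProjectionFiltrationOn P (Icc a b))
    (hf : IsAdaptedOn f P (Icc a b)) (hf_cont : ContinuousOn f (Icc a b)) :
    ∃ J, Tendsto (fun θ : Finset ℝ ↦ leftSum f P θ.sort) (partitionFilter a b) (𝓝 J) := by
  have := partitionFilter_neBot hab
  refine CompleteSpace.complete (Metric.cauchy_iff.mpr ⟨inferInstance, fun ε hε ↦ ?_⟩)
  obtain ⟨δ, hδ, hfδ⟩ := Metric.uniformContinuousOn_iff_le.mp
    (isCompact_Icc.uniformContinuousOn_of_continuous hf_cont) (ε / 3) (by positivity)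
  refine ⟨_, image_mem_map ((hasBasis_partitionFilter a b).mem_of_mem hδ), ?_⟩
  rintro _ ⟨θ, ⟨hθ, hθδ⟩, rfl⟩ _ ⟨η, ⟨hη, hηδ⟩, rfl⟩
  have hε3 : 0 ≤ ε / 3 := by positivity
  have hleft := IsPartitionOf.dist_leftSum_le_of_subset hP hf hε3 hfδ hθ (hθ.union_s12 hη)
    Finset.subset_union_left hθδ.le
  have hright := IsPartitionOf.dist_leftSum_le_of_subset hP hf hε3 hfδ hη (hθ.union_s12 hη)
    Finset.subset_union_right hηδ.le
  linarith [dist_triangle_right (leftSum f P θ.sort) (leftSum f P η.sort)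
    (leftSum f P (θ ∪ η).sort)]

end Refinement

section Operator

variable {H : Type*} [NormedAddCommGroup H] [InnerProductSpace ℂ H] {a b : ℝ}
  {M : Set (H →L[ℂ] H)} {Ω : H} {P f X : ℝ → H →L[ℂ] H}

lemma sigmaSum_apply_of_mem_centralizer (hf : ∀ s ∈ Icc a b, f s ∈ M) (hX : ∀ s ∈ Icc a b, X s ∈ M)
    (hX_mart : ∀ s ∈ Icc a b, X s Ω = P s (X b Ω)) {x' : H →L[ℂ] H} (hx' : x' ∈ M.centralizer)
    {θ : Finset ℝ} (hθ : IsPartitionOf a b θ) :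
    sigmaSum f X θ (x' Ω) = x' (leftSum f P θ.sort (X b Ω)) := by
  have hcomm : ∀ T ∈ M, ∀ v, T (x' v) = x' (T v) := fun T hT ↦ DFunLike.congr_fun (hx' T hT)
  have hmem : ∀ s ∈ θ.sort, s ∈ Icc a b := fun s hs ↦ hθ.2.2 s ((Finset.mem_sort _).mp hs)
  change leftSum f X θ.sort (x' Ω) = _
  generalize θ.sort = l at hmem
  induction l with
  | nil => simp
  | cons s l ih =>
    rcases l with - | ⟨u, l⟩
    · simp
    obtain ⟨hs, hmem⟩ := List.forall_mem_cons.mp hmem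
    have hu := hmem u List.mem_cons_self
    have hterm : f s ((X u - X s) (x' Ω)) = x' (f s ((P u - P s) (X b Ω))) := by
      rw [sub_apply, sub_apply, hcomm _ (hX u hu), hcomm _ (hX s hs), ← map_sub,
        hcomm _ (hf s hs), hX_mart u hu, hX_mart s hs]
    simp only [leftSum_cons_cons, add_apply, mul_apply_eq_comp, map_add, hterm, ih hmem]

theorem right_integral_exists_continuous_general [CompleteSpace H] (hab : a ≤ b)
    (hP : IsProjectionFiltrationOn P (Icc a b)) (hf_mem : ∀ s ∈ Icc a b, f s ∈ M)
    (hf_cont : ContinuousOn f (Icc a b)) (hf : IsAdaptedOn f P (Icc a b))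
    (hX_mem : ∀ s ∈ Icc a b, X s ∈ M) (hX_mart : ∀ s ∈ Icc a b, X s Ω = P s (X b Ω)) :
    ∃ I : H → H,
      (∀ x' ∈ M.centralizer,
        Tendsto (fun θ ↦ sigmaSum f X θ (x' Ω)) (partitionFilter a b) (𝓝 (I (x' Ω)))) ∧
      ∀ x' ∈ M.centralizer, ∀ y' ∈ M.centralizer, I ((y' * x') Ω) = y' (I (x' Ω)) := by
  have := partitionFilter_neBot hab
  obtain ⟨J, hJ⟩ := exists_tendsto_leftSum hab hP hf hf_cont
  have hlim : ∀ x' ∈ M.centralizer, Tendsto (fun θ ↦ sigmaSum f X θ (x' Ω)) (partitionFilter a b)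
      (𝓝 (x' (J (X b Ω)))) := fun x' hx' ↦
    (((x' ∘L ContinuousLinearMap.apply ℂ H (X b Ω)).continuous.tendsto J).comp hJ).congr' <|
      mem_inf_of_right fun θ hθ ↦
        (sigmaSum_apply_of_mem_centralizer hf_mem hX_mem hX_mart hx' hθ).symm
  let I : H → H := fun v ↦ limUnder (partitionFilter a b) fun θ ↦ sigmaSum f X θ v
  have hI : ∀ x' ∈ M.centralizer, I (x' Ω) = x' (J (X b Ω)) :=
    fun x' hx' ↦ (hlim x' hx').limUnder_eq
  refine ⟨I, fun x' hx' ↦ hI x' hx' ▸ hlim x' hx', fun x' hx' y' hy' ↦ ?_⟩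
  rw [hI _ (Set.mul_mem_centralizer hy' hx'), hI x' hx', mul_apply_eq_comp]

end Operator

/-- For a von Neumann algebra A, a vector Ω, increasing projections (P_t),
an A-valued norm-continuous adapted-commuting f, and X : [0,t] → A with
X(s)Ω = P_s(X(t)Ω), the integral sums S_θ(x'Ω) converge in norm as the mesh of the
partition θ of [0,t] tends to 0 for every x' ∈ A', and the limit I satisfies
I((y'x')Ω) = y' I(x'Ω). -/
theorem right_integral_exists_continuous
    {H : Type*} [NormedAddCommGroup H] [InnerProductSpace ℂ H] [CompleteSpace H]
    (A : VonNeumannAlgebra H) (Ω : H)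
    (P : ℝ → H →L[ℂ] H)
    (hP_proj : ∀ s, 0 ≤ s → IsSelfAdjoint (P s) ∧ P s ∘L P s = P s)
    (hP_mono : ∀ s u, 0 ≤ s → s ≤ u → P s ∘L P u = P s ∧ P u ∘L P s = P s)
    (f : ℝ → H →L[ℂ] H)
    (hf_mem : ∀ s, 0 ≤ s → f s ∈ A)
    (hf_cont : ContinuousOn f (Set.Ici (0 : ℝ)))
    (hf_adapted : ∀ s u, 0 ≤ s → s ≤ u → f s ∘L P u = P u ∘L f s)
    (t : ℝ) (ht : 0 < t)
    (X : ℝ → H →L[ℂ] H)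
    (hX_mem : ∀ s ∈ Set.Icc (0 : ℝ) t, X s ∈ A)
    (hX_mart : ∀ s, 0 ≤ s → s ≤ t → X s Ω = P s (X t Ω)) :
    ∃ I : H → H,
      (∀ x' ∈ A.commutant, ∀ ε > (0 : ℝ), ∃ δ > (0 : ℝ), ∀ θ : Finset ℝ,
        IsPartitionOf 0 t θ → meshOf θ < δ →
          ‖sigmaSum f X θ (x' Ω) - I (x' Ω)‖ < ε) ∧
      (∀ x' ∈ A.commutant, ∀ y' ∈ A.commutant,
        I ((y' * x') Ω) = y' (I (x' Ω))) := by
  obtain ⟨I, hlim, hI⟩ := right_integral_exists_continuous_general (M := A) ht.le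
    ⟨fun s hs ↦ ⟨(hP_proj s hs.1).2, (hP_proj s hs.1).1⟩,
      fun s hs u _ hsu ↦ (hP_mono s u hs.1 hsu).1⟩
    (fun s hs ↦ hf_mem s hs.1) (hf_cont.mono Icc_subset_Ici_self)
    (fun s hs u _ hsu ↦ hf_adapted s u hs.1 hsu) hX_mem fun s hs ↦ hX_mart s hs.1 hs.2
  rw [← A.coe_commutant] at hlim hI
  refine ⟨I, fun x' hx' ↦ ?_, hI⟩
  simpa [Metric.ball, dist_eq_norm, and_imp] using
    ((hasBasis_partitionFilter 0 t).tendsto_iff Metric.nhds_basis_ball).mp (hlim x' hx')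
end
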